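/- arXiv:2102.02708 — 2 statements merged into one kernel-verified Lean document; each statement's English description precedes it below -/
import Mathlib

section
/- Let g ∈ ℝ[z₁,…,zₙ] be a Γ₁-stable (Hurwitz-stable) polynomial. Then for every k, the degree-k part g_k is either identically 0 or Γ_{1/2}-stable. -/
/-!
A Hurwitz-stable `g` with real coefficients satisfies `|g (-z)| ≤ |g z|` on the right half-space, so
by the maximum modulus principle each of `g z ± g (-z)` vanishes there identically or nowhere. On a
ray `s ↦ s z` with `z ∈ Γ_{1/2}ⁿ`, such a parity part is, up to a factor `2` or `2 s`, a polynomial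
in `t = s²`, Hurwitz-stable as `√t` ranges over `Γ_{1/2}` and `Γ_{1/2} · Γ_{1/2} ⊆ Γ₁`; its
coefficients are the numbers `g_k z`. For a family of Hurwitz-stable polynomials depending
holomorphically on `z`, a second use of the maximum modulus principle shows that the derivative in
`t` vanishes for all `z` or for none; with the Gauss–Lucas theorem and the reversal of coefficients,
every coefficient then vanishes identically or nowhere.
-/

open MvPolynomial

/-- A real polynomial is `Γ_α`-stable if it does not vanish when all variables are
assigned complex values in the open sector of aperture `απ` centered on the positive
real axis. -/
def SectorStable {n : ℕ} (α : ℝ) (g : MvPolynomial (Fin n) ℝ) : Prop :=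
  ∀ z : Fin n → ℂ, (∀ i, z i ≠ 0 ∧ |(z i).arg| < α * Real.pi / 2) →
    MvPolynomial.aeval z g ≠ 0

open Polynomial (contract derivative divX)

section Sector

/-- The open sector `Γ_α` of aperture `απ` centered on the positive real axis. -/
def sector (α : ℝ) : Set ℂ := {z | z ≠ 0 ∧ |z.arg| < α * Real.pi / 2}

theorem ofReal_mem_sector {α x : ℝ} (hα : 0 < α) (hx : 0 < x) : (x : ℂ) ∈ sector α := by
  refine ⟨Complex.ofReal_ne_zero.2 hx.ne', ?_⟩
  rw [Complex.arg_ofReal_of_nonneg hx.le, abs_zero]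
  positivity

theorem mem_sector_one {z : ℂ} : z ∈ sector 1 ↔ 0 < z.re := by
  simp only [sector, Set.mem_ofPred_eq, one_mul, Complex.abs_arg_lt_pi_div_two_iff]
  refine ⟨fun h => h.2.resolve_right h.1, fun h => ⟨?_, Or.inl h⟩⟩
  rintro rfl
  exact lt_irrefl 0 h

theorem mem_sector_half {z : ℂ} : z ∈ sector (1 / 2) ↔ |z.im| < z.re := by
  have hpi := Real.pi_pos
  have arg_iff (hre : 0 < z.re) : |z.arg| < 1 / 2 * Real.pi / 2 ↔ |z.im| < z.re := by
    have harg := abs_lt.1 (Complex.abs_arg_lt_pi_div_two_iff.2 (Or.inl hre))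
    have hquarter : Real.pi / 4 ∈ Set.Ioo (-(Real.pi / 2)) (Real.pi / 2) :=
      ⟨by linarith, by linarith⟩
    have hneg : -(Real.pi / 4) ∈ Set.Ioo (-(Real.pi / 2)) (Real.pi / 2) :=
      ⟨by linarith, by linarith⟩
    rw [show 1 / 2 * Real.pi / 2 = Real.pi / 4 by ring, abs_lt,
      ← Real.strictMonoOn_tan.lt_iff_lt hneg harg, ← Real.strictMonoOn_tan.lt_iff_lt harg hquarter,
      Real.tan_neg, Real.tan_pi_div_four, Complex.tan_arg, ← abs_lt, abs_div, abs_of_pos hre,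
      div_lt_one hre]
  constructor
  · rintro ⟨hz, harg⟩
    have hre : 0 < z.re :=
      (Complex.abs_arg_lt_pi_div_two_iff.1 (by linarith)).resolve_right hz
    exact (arg_iff hre).1 harg
  · intro h
    have hre : 0 < z.re := (abs_nonneg _).trans_lt h
    exact ⟨(mem_sector_one.2 hre).1, (arg_iff hre).2 h⟩

theorem sector_one_eq : sector 1 = {z | 0 < z.re} :=
  Set.ext fun _ => mem_sector_one

theorem sector_half_eq : sector (1 / 2) = {z | |z.im| < z.re} :=
  Set.ext fun _ => mem_sector_half

theorem isOpen_sector_one : IsOpen (sector 1) :=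
  sector_one_eq ▸ isOpen_lt continuous_const Complex.continuous_re

theorem isOpen_sector_half : IsOpen (sector (1 / 2)) :=
  sector_half_eq ▸ isOpen_lt Complex.continuous_im.abs Complex.continuous_re

theorem convex_sector_one : Convex ℝ (sector 1) :=
  sector_one_eq ▸ convex_halfSpace_re_gt 0

theorem convex_sector_half : Convex ℝ (sector (1 / 2)) := by
  have hinter : sector (1 / 2) = {z | 0 < (Complex.reLm + Complex.imLm) z} ∩
      {z | 0 < (Complex.reLm - Complex.imLm) z} := by
    ext z
    simp only [mem_sector_half, abs_lt, Set.mem_inter_iff, Set.mem_ofPred_eq, LinearMap.add_apply,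
      LinearMap.sub_apply, Complex.reLm_coe, Complex.imLm_coe, sub_pos, neg_lt_iff_pos_add']
  rw [hinter]
  exact (convex_halfSpace_gt (LinearMap.isLinear _) 0).inter
    (convex_halfSpace_gt (LinearMap.isLinear _) 0)

theorem mul_mem_sector_one {z w : ℂ} (hz : z ∈ sector (1 / 2)) (hw : w ∈ sector (1 / 2)) :
    z * w ∈ sector 1 := by
  rw [mem_sector_half, abs_lt] at hz hw
  rw [mem_sector_one, Complex.mul_re]
  nlinarith [hz.1, hz.2, hw.1, hw.2]

theorem exists_sq_eq_of_mem_sector_one {t : ℂ} (ht : t ∈ sector 1) :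
    ∃ s ∈ sector (1 / 2), s ^ 2 = t := by
  obtain ⟨s, rfl⟩ := IsAlgClosed.exists_pow_nat_eq t two_pos
  have hsq : |s.im| < |s.re| := by
    rw [mem_sector_one, sq, Complex.mul_re] at ht
    exact sq_lt_sq.1 (by linarith)
  rcases le_total 0 s.re with hre | hre
  · exact ⟨s, mem_sector_half.2 (by rwa [abs_of_nonneg hre] at hsq), rfl⟩
  · refine ⟨-s, mem_sector_half.2 ?_, neg_sq s⟩
    rwa [Complex.neg_im, Complex.neg_re, abs_neg, ← abs_of_nonpos hre]

variable {σ : Type*}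

/-- The polysector `Γ_α^σ`: the points all of whose coordinates lie in `Γ_α`. -/
def polysector (σ : Type*) (α : ℝ) : Set (σ → ℂ) := {z | ∀ i, z i ∈ sector α}

theorem polysector_eq_pi (α : ℝ) : polysector σ α = Set.univ.pi fun _ => sector α := by
  ext z
  exact Set.mem_univ_pi.symm

theorem isOpen_polysector [Finite σ] {α : ℝ} (h : IsOpen (sector α)) :
    IsOpen (polysector σ α) :=
  polysector_eq_pi (σ := σ) α ▸ isOpen_set_pi Set.finite_univ fun _ _ => h

theorem isPreconnected_polysector {α : ℝ} (h : Convex ℝ (sector α)) :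
    IsPreconnected (polysector σ α) :=
  polysector_eq_pi (σ := σ) α ▸ (convex_pi fun _ _ => h).isPreconnected

theorem exists_smul_mem_polysector {z : σ → ℂ} (hz : z ∈ polysector σ (1 / 2)) {t : ℂ}
    (ht : t ∈ sector 1) : ∃ s : ℂ, s ≠ 0 ∧ s ^ 2 = t ∧ s • z ∈ polysector σ 1 := by
  obtain ⟨s, hs, hsq⟩ := exists_sq_eq_of_mem_sector_one ht
  exact ⟨s, hs.1, hsq, fun i => mul_mem_sector_one hs (hz i)⟩

theorem exists_mem_polysector_comp_eq {α : ℝ} (hα : 0 < α) {τ : Type*} {f : τ → σ}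
    (hf : f.Injective) {z : τ → ℂ} (hz : z ∈ polysector τ α) : ∃ w ∈ polysector σ α, w ∘ f = z := by
  refine ⟨Function.extend f z 1, fun i => ?_, Function.extend_comp hf z 1⟩
  by_cases hi : ∃ j, f j = i
  · obtain ⟨j, rfl⟩ := hi
    rw [hf.extend_apply]
    exact hz j
  · rw [Function.extend_apply' _ _ _ hi]
    exact_mod_cast ofReal_mem_sector hα one_pos

end Sector

section Univariate

theorem eq_of_eval_ofReal_eq {P Q : Polynomial ℂ} {a : ℝ}
    (h : ∀ x : ℝ, a < x → P.eval (x : ℂ) = Q.eval (x : ℂ)) : P = Q := by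
  refine Polynomial.eq_of_infinite_eval_eq P Q
    (((Set.Ioi_infinite a).image Complex.ofReal_injective.injOn).mono ?_)
  rintro _ ⟨x, hx, rfl⟩
  exact h x hx

theorem norm_eval_le_norm_eval_of_forall_root {P : Polynomial ℂ} {x y : ℂ}
    (h : ∀ a ∈ P.roots, ‖x - a‖ ≤ ‖y - a‖) : ‖P.eval x‖ ≤ ‖P.eval y‖ := by
  have norm_eval (w : ℂ) :
      ‖P.eval w‖ = ‖P.leadingCoeff‖ * (P.roots.map fun a => ‖w - a‖).prod := by
    rw [(IsAlgClosed.splits P).eval_eq_prod_roots, norm_mul]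
    congr 1
    exact (map_multiset_prod (normHom : ℂ →*₀ ℝ) _).trans (by rw [Multiset.map_map]; rfl)
  rw [norm_eval, norm_eval]
  gcongr
  exact Multiset.prod_map_le_prod_map₀ _ _ (fun _ _ => norm_nonneg _) h

theorem re_nonpos_of_mem_roots {P : Polynomial ℂ} (hP : ∀ t : ℂ, 0 < t.re → P.eval t ≠ 0) {a : ℂ}
    (ha : a ∈ P.roots) : a.re ≤ 0 :=
  not_lt.1 fun hre => hP a hre (Polynomial.isRoot_of_mem_roots ha)

theorem norm_eval_le_norm_eval_of_abs_re_le {P : Polynomial ℂ}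
    (hP : ∀ t : ℂ, 0 < t.re → P.eval t ≠ 0) {x y : ℂ} (him : x.im = y.im)
    (hre : |x.re| ≤ y.re) : ‖P.eval x‖ ≤ ‖P.eval y‖ := by
  refine norm_eval_le_norm_eval_of_forall_root fun a ha => ?_
  have ha_re := re_nonpos_of_mem_roots hP ha
  have hsq : (x.re - a.re) ^ 2 ≤ (y.re - a.re) ^ 2 :=
    sq_le_sq' (by linarith [neg_le_of_abs_le hre]) (by linarith [le_of_abs_le hre])
  rw [Complex.norm_def, Complex.norm_def]
  refine Real.sqrt_le_sqrt ?_
  simpa only [Complex.normSq_apply, Complex.sub_re, Complex.sub_im, him, ← sq, add_le_add_iff_right]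
    using hsq

theorem eval_derivative_ne_zero {P : Polynomial ℂ} (hP : ∀ t : ℂ, 0 < t.re → P.eval t ≠ 0)
    (hP' : derivative P ≠ 0) {t : ℂ} (ht : 0 < t.re) : (derivative P).eval t ≠ 0 := by
  intro hroot
  have hdeg : 0 < P.degree := Polynomial.natDegree_pos_iff_degree_pos.1 <|
    Nat.pos_of_ne_zero fun h => hP' (Polynomial.derivative_of_natDegree_zero h)
  have hroots : P.rootSet ℂ ⊆ {a | a.re ≤ 0} := fun a ha =>
    re_nonpos_of_mem_roots hP (by simpa [Polynomial.rootSet] using ha)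
  have hmem : t ∈ convexHull ℝ (P.rootSet ℂ) :=
    Polynomial.rootSet_derivative_subset_convexHull_rootSet hdeg
      ((Polynomial.mem_rootSet).2 ⟨hP', by simpa using hroot⟩)
  exact ht.not_ge (convexHull_min hroots (convex_halfSpace_re_le 0) hmem)

variable {A : Type*}

/-- The polynomial `Q` with `P(X) + (-1)ᵏ P(-X) = 2 X ^ (k % 2) Q(X²)`: its coefficients are those
of `P` in the degrees of the same parity as `k`. -/
noncomputable def parityPart [CommSemiring A] (k : ℕ) (P : Polynomial A) : Polynomial A :=
  contract 2 (divX^[k % 2] P)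

theorem coeff_parityPart [CommSemiring A] (k m : ℕ) (P : Polynomial A) :
    (parityPart k P).coeff m = P.coeff (2 * m + k % 2) := by
  rw [parityPart, Polynomial.coeff_contract two_ne_zero, mul_comm]
  rcases Nat.mod_two_eq_zero_or_one k with hk | hk <;> simp [hk, Polynomial.coeff_divX]

theorem natDegree_parityPart_le [CommSemiring A] (k : ℕ) (P : Polynomial A) :
    (parityPart k P).natDegree ≤ P.natDegree := by
  refine Polynomial.natDegree_le_iff_coeff_eq_zero.2 fun m hm => ?_
  rw [coeff_parityPart, Polynomial.coeff_eq_zero_of_natDegree_lt (by lia)]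

theorem eval_eq_eval_contract_add [CommSemiring A] (P : Polynomial A) (s : A) :
    P.eval s = (contract 2 P).eval (s ^ 2) + s * (contract 2 (divX P)).eval (s ^ 2) := by
  have hP : P = Polynomial.expand A 2 (contract 2 P) +
      Polynomial.X * Polynomial.expand A 2 (contract 2 (divX P)) := by
    ext n
    cases n with
    | zero => simp [Polynomial.coeff_expand, Polynomial.coeff_contract]
    | succ n =>
      simp only [Polynomial.coeff_add, Polynomial.coeff_X_mul, Polynomial.coeff_expand two_pos,
        Polynomial.coeff_contract two_ne_zero, Polynomial.coeff_divX]
      rcases Nat.even_or_odd' n with ⟨m, rfl | rfl⟩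
      · rw [if_neg (by lia), if_pos (by lia), zero_add]
        congr 1
        lia
      · rw [if_pos (by lia), if_neg (by lia), add_zero]
        congr 1
        lia
  conv_lhs => rw [hP]
  simp

theorem eval_add_neg_one_pow_mul_eval_neg [CommRing A] (k : ℕ) (P : Polynomial A) (s : A) :
    P.eval s + (-1) ^ k * P.eval (-s) = 2 * s ^ (k % 2) * (parityPart k P).eval (s ^ 2) := by
  rw [eval_eq_eval_contract_add P s, eval_eq_eval_contract_add P (-s), neg_sq, parityPart]
  rcases Nat.mod_two_eq_zero_or_one k with hk | hk
  · rw [(Nat.even_iff.2 hk).neg_one_pow, hk, Function.iterate_zero_apply]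
    ring
  · rw [(Nat.odd_iff.2 hk).neg_one_pow, hk, Function.iterate_one]
    ring

end Univariate

section HurwitzFamily

/-- The alternative offered by Hurwitz's theorem: `f` vanishes identically or nowhere on `U`. -/
def VanishesOrNonvanishing {E : Type*} (U : Set E) (f : E → ℂ) : Prop :=
  (∀ z ∈ U, f z = 0) ∨ ∀ z ∈ U, f z ≠ 0

variable {E : Type*} [NormedAddCommGroup E] [NormedSpace ℂ E] {U : Set E}

theorem eqOn_of_norm_le_of_eq (hopen : IsOpen U) (hconn : IsPreconnected U) {f h : E → ℂ}
    (hf : DifferentiableOn ℂ f U) (hh : DifferentiableOn ℂ h U) (hne : ∀ z ∈ U, h z ≠ 0)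
    (hle : ∀ z ∈ U, ‖f z‖ ≤ ‖h z‖) {c : E} (hc : c ∈ U) (heq : f c = h c) : Set.EqOn f h U := by
  have hquot : f c / h c = 1 := by rw [heq, div_self (hne c hc)]
  have hdiff : DifferentiableOn ℂ (f / h) U := by
    simpa only [div_eq_mul_inv] using hf.mul (hh.inv hne)
  have hmax : IsMaxOn (norm ∘ (f / h)) U c := fun z hz => by
    change ‖f z / h z‖ ≤ ‖f c / h c‖
    rw [hquot, norm_div, norm_one]
    exact div_le_one_of_le₀ (hle z hz) (norm_nonneg _)
  intro z hz
  have hconst : f z / h z = f c / h c :=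
    Complex.eqOn_of_isPreconnected_of_isMaxOn_norm hconn hopen hdiff hc hmax hz
  rw [hquot] at hconst
  exact eq_of_div_eq_one hconst

/-- A family of polynomials of degree at most `d`, depending holomorphically on `z ∈ U`, all of
which are Hurwitz-stable. -/
structure IsHurwitzFamily (U : Set E) (d : ℕ) (q : E → Polynomial ℂ) : Prop where
  natDegree_le : ∀ z ∈ U, (q z).natDegree ≤ d
  differentiableOn_coeff : ∀ i, DifferentiableOn ℂ (fun z => (q z).coeff i) U
  eval_ne_zero : ∀ z ∈ U, ∀ t : ℂ, 0 < t.re → (q z).eval t ≠ 0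

namespace IsHurwitzFamily

variable {d : ℕ} {q : E → Polynomial ℂ}

theorem differentiableOn_eval (h : IsHurwitzFamily U d q) (t : ℂ) :
    DifferentiableOn ℂ (fun z => (q z).eval t) U := by
  have hsum : DifferentiableOn ℂ (fun z => ∑ i ∈ Finset.range (d + 1), (q z).coeff i * t ^ i) U :=
    DifferentiableOn.fun_sum fun i _ => (h.differentiableOn_coeff i).mul_const _
  exact hsum.congr fun z hz =>
    Polynomial.eval_eq_sum_range' (Nat.lt_succ_of_le (h.natDegree_le z hz)) t

theorem reflect (h : IsHurwitzFamily U d q) :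
    IsHurwitzFamily U d (fun z => (q z).reflect d) where
  natDegree_le z hz := Polynomial.natDegree_reflect_le.trans (max_le le_rfl (h.natDegree_le z hz))
  differentiableOn_coeff i := by
    simpa only [Polynomial.coeff_reflect] using h.differentiableOn_coeff _
  eval_ne_zero z hz t ht := by
    have ht0 : t ≠ 0 := (mem_sector_one.2 ht).1
    have hinv : 0 < (t⁻¹).re := by
      rw [Complex.inv_re]
      exact div_pos ht (Complex.normSq_pos.2 ht0)
    let _ : Invertible t⁻¹ := invertibleOfNonzero (inv_ne_zero ht0)
    have := (Polynomial.eval₂_reflect_eq_zero_iff (RingHom.id ℂ) t⁻¹ d (q z)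
      (h.natDegree_le z hz)).not.2 (h.eval_ne_zero z hz _ hinv)
    simpa using this

-- Were `q c` constant at a single `c`, then `|q z (1)| ≤ |q z (t)|`, `t > 1`, would be an equality
-- at `z = c`; by the maximum principle it would be one for all `z`.
theorem derivative_eq_zero_or (hopen : IsOpen U) (hconn : IsPreconnected U)
    (h : IsHurwitzFamily U d q) :
    (∀ z ∈ U, derivative (q z) = 0) ∨ IsHurwitzFamily U (d - 1) (fun z => derivative (q z)) := by
  by_cases hzero : ∃ c ∈ U, derivative (q c) = 0
  · obtain ⟨c, hc, hderiv⟩ := hzero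
    have hconst := Polynomial.eq_C_of_derivative_eq_zero hderiv
    left
    intro z hz
    have hz_const : q z = Polynomial.C ((q z).eval 1) := by
      refine eq_of_eval_ofReal_eq (a := 1) fun t ht => ?_
      have hle (w : E) (hw : w ∈ U) : ‖(q w).eval 1‖ ≤ ‖(q w).eval (t : ℂ)‖ :=
        norm_eval_le_norm_eval_of_abs_re_le (h.eval_ne_zero w hw) (by simp) (by simpa using ht.le)
      have heq : (q c).eval 1 = (q c).eval (t : ℂ) := by
        rw [hconst, Polynomial.eval_C, Polynomial.eval_C]
      rw [Polynomial.eval_C]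
      exact (eqOn_of_norm_le_of_eq hopen hconn (h.differentiableOn_eval 1)
        (h.differentiableOn_eval t)
        (fun w hw => h.eval_ne_zero w hw t (by simpa using one_pos.trans ht)) hle hc heq hz).symm
    rw [hz_const, Polynomial.derivative_C]
  · right
    push Not at hzero
    exact {
      natDegree_le := fun z hz => (Polynomial.natDegree_derivative_le _).trans
        (Nat.sub_le_sub_right (h.natDegree_le z hz) 1)
      differentiableOn_coeff := fun i => by
        simpa only [Polynomial.coeff_derivative] using (h.differentiableOn_coeff _).mul_const _
      eval_ne_zero := fun z hz _ ht =>
        eval_derivative_ne_zero (h.eval_ne_zero z hz) (hzero z hz) ht }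

theorem vanishesOrNonvanishing_coeff_succ (hopen : IsOpen U) (hconn : IsPreconnected U)
    (h : IsHurwitzFamily U d q) {m : ℕ}
    (hm : IsHurwitzFamily U (d - 1) (fun z => derivative (q z)) →
      VanishesOrNonvanishing U fun z => (derivative (q z)).coeff m) :
    VanishesOrNonvanishing U fun z => (q z).coeff (m + 1) := by
  have coeff_eq_zero_iff (z : E) : (derivative (q z)).coeff m = 0 ↔ (q z).coeff (m + 1) = 0 := by
    rw [Polynomial.coeff_derivative, mul_eq_zero_iff_right (Nat.cast_add_one_ne_zero m)]
  simp only [VanishesOrNonvanishing, ne_eq, coeff_eq_zero_iff] at hm ⊢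
  rcases h.derivative_eq_zero_or hopen hconn with hzero | hderiv
  · exact Or.inl fun z hz => (coeff_eq_zero_iff z).1 (by rw [hzero z hz, Polynomial.coeff_zero])
  · exact hm hderiv

theorem vanishesOrNonvanishing_coeff_top (hopen : IsOpen U) (hconn : IsPreconnected U)
    (h : IsHurwitzFamily U d q) :
    VanishesOrNonvanishing U fun z => (q z).coeff d := by
  induction d generalizing q with
  | zero =>
    refine Or.inr fun z hz => ?_
    have heval := h.eval_ne_zero z hz 1 (by simp)
    rwa [Polynomial.eq_C_of_natDegree_le_zero (h.natDegree_le z hz), Polynomial.eval_C] at heval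
  | succ d ih => exact h.vanishesOrNonvanishing_coeff_succ hopen hconn ih

theorem vanishesOrNonvanishing_coeff_zero (hopen : IsOpen U) (hconn : IsPreconnected U)
    (h : IsHurwitzFamily U d q) :
    VanishesOrNonvanishing U fun z => (q z).coeff 0 := by
  simpa [Polynomial.coeff_reflect, Polynomial.revAt_le] using
    h.reflect.vanishesOrNonvanishing_coeff_top hopen hconn

theorem vanishesOrNonvanishing_coeff (hopen : IsOpen U) (hconn : IsPreconnected U)
    (h : IsHurwitzFamily U d q) (m : ℕ) :
    VanishesOrNonvanishing U fun z => (q z).coeff m := by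
  induction m generalizing q d with
  | zero => exact h.vanishesOrNonvanishing_coeff_zero hopen hconn
  | succ m ih => exact h.vanishesOrNonvanishing_coeff_succ hopen hconn ih

end IsHurwitzFamily

end HurwitzFamily

section RestrictLine

variable {σ R A : Type*} [CommSemiring R] [CommSemiring A] [Algebra R A]

/-- The univariate polynomial `t ↦ g (t u + v)`: the restriction of `g` to a line. -/
noncomputable def restrictLine (u v : σ → A) (g : MvPolynomial σ R) : Polynomial A :=
  aeval (fun i => Polynomial.C (u i) * Polynomial.X + Polynomial.C (v i)) g

theorem eval_restrictLine (u v : σ → A) (g : MvPolynomial σ R) (t : A) :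
    (restrictLine u v g).eval t = aeval (t • u + v) g := by
  have hcomp := comp_aeval_apply
    (fun i => Polynomial.C (u i) * Polynomial.X + Polynomial.C (v i))
    ((Polynomial.aeval t).restrictScalars R) g
  refine hcomp.trans ?_
  congr 2
  ext i
  simp [mul_comm t]

theorem coeff_restrictLine_zero_right (z : σ → A) (g : MvPolynomial σ R) (k : ℕ) :
    (restrictLine z 0 g).coeff k = aeval z (homogeneousComponent k g) := by
  induction g using MvPolynomial.induction_on' with
  | monomial s a =>
    have hline : restrictLine z 0 (monomial s a) =
        Polynomial.C (aeval z (monomial s a)) * Polynomial.X ^ s.degree := by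
      simp only [restrictLine, aeval_monomial, Pi.zero_apply, map_zero, add_zero, mul_pow,
        Finsupp.prod_mul, map_mul, mul_assoc, Polynomial.C_eq_algebraMap,
        IsScalarTower.algebraMap_apply R A (Polynomial A)]
      simp only [Finsupp.prod, map_prod, map_pow, Finset.prod_pow_eq_pow_sum, Finsupp.degree_apply]
    rw [hline, Polynomial.coeff_C_mul_X_pow,
      homogeneousComponent_of_mem (isHomogeneous_monomial a rfl), apply_ite (aeval z), map_zero]
  | add p q hp hq =>
    rw [map_add, map_add, ← hp, ← hq, ← Polynomial.coeff_add, restrictLine, map_add]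
    rfl

theorem natDegree_restrictLine_zero_right_le (z : σ → A) (g : MvPolynomial σ R) :
    (restrictLine z 0 g).natDegree ≤ g.totalDegree :=
  Polynomial.natDegree_le_iff_coeff_eq_zero.2 fun k hk => by
    rw [coeff_restrictLine_zero_right, homogeneousComponent_eq_zero k g hk, map_zero]

end RestrictLine

section HurwitzStable

variable {σ : Type*} {g : MvPolynomial σ ℝ}

theorem aeval_conj (g : MvPolynomial σ ℝ) (z : σ → ℂ) :
    aeval (fun i => starRingEnd ℂ (z i)) g = starRingEnd ℂ (aeval z g) :=
  (comp_aeval_apply z Complex.conjAe.toAlgHom g).symm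

-- Since `g` has real coefficients, `|g (-z)| = |g (-conj z)|`, and the points `z` and `-conj z` lie
-- on the line `t ↦ t Re z + i Im z`, at the parameters `1` and `-1`.
theorem norm_aeval_neg_le (hg : ∀ z ∈ polysector σ 1, aeval z g ≠ 0) {z : σ → ℂ}
    (hz : z ∈ polysector σ 1) : ‖aeval (-z) g‖ ≤ ‖aeval z g‖ := by
  set P := restrictLine (fun i => ((z i).re : ℂ)) (fun i => (z i).im * Complex.I) g with hP
  have hstable (t : ℂ) (ht : 0 < t.re) : P.eval t ≠ 0 := by
    rw [hP, eval_restrictLine]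
    refine hg _ fun i => mem_sector_one.2 ?_
    simpa using mul_pos ht (mem_sector_one.1 (hz i))
  have hone : P.eval 1 = aeval z g := by
    rw [hP, eval_restrictLine]
    congr 2
    ext i
    simp
  have hneg : P.eval (-1) = starRingEnd ℂ (aeval (-z) g) := by
    rw [hP, eval_restrictLine, ← aeval_conj]
    congr 2
    ext i
    apply Complex.ext <;> simp
  rw [← Complex.norm_conj, ← hneg, ← hone]
  exact norm_eval_le_norm_eval_of_abs_re_le hstable (by simp) (by simp)

theorem eq_zero_of_forall_polysector {α : ℝ} (hα : 0 < α) {p : MvPolynomial σ ℝ}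
    (h : ∀ z ∈ polysector σ α, aeval z p = 0) : p = 0 := by
  refine funext_set (fun _ => Set.Ioi 0) (fun _ => Set.Ioi_infinite 0) fun x hx => ?_
  have hmem : algebraMap ℝ ℂ ∘ x ∈ polysector σ α := fun i => ofReal_mem_sector hα (hx i trivial)
  have heval := h _ hmem
  rw [aeval_algebraMap_apply] at heval
  simpa using heval

variable [Finite σ]

theorem differentiable_aeval (p : MvPolynomial σ ℝ) :
    Differentiable ℂ fun z : σ → ℂ => aeval z p := by
  cases nonempty_fintype σ
  simp only [aeval_def, eval₂_eq_eval_map]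
  exact fun z => ((AnalyticOnNhd.eval_mvPolynomial _) z trivial).differentiableAt

theorem vanishesOrNonvanishing_aeval_add_aeval_neg (hg : ∀ z ∈ polysector σ 1, aeval z g ≠ 0)
    {ε : ℂ} (hε : ‖ε‖ ≤ 1) :
    VanishesOrNonvanishing (polysector σ 1) fun z => aeval z g + ε * aeval (-z) g := by
  cases nonempty_fintype σ
  refine or_iff_not_imp_right.2 fun hzero z hz => ?_
  push Not at hzero
  obtain ⟨c, hc, hc_zero⟩ := hzero
  have hle (w : σ → ℂ) (hw : w ∈ polysector σ 1) : ‖-(ε * aeval (-w) g)‖ ≤ ‖aeval w g‖ := by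
    rw [norm_neg, norm_mul]
    exact (mul_le_of_le_one_left (norm_nonneg _) hε).trans (norm_aeval_neg_le hg hw)
  have hdiff := differentiable_aeval g
  have hdiff_neg : Differentiable ℂ fun w : σ → ℂ => -(ε * aeval (-w) g) :=
    ((hdiff.comp differentiable_id.neg).const_mul ε).neg
  have heq := eqOn_of_norm_le_of_eq (isOpen_polysector isOpen_sector_one)
    (isPreconnected_polysector convex_sector_one) hdiff_neg.differentiableOn
    hdiff.differentiableOn hg hle hc (neg_eq_of_add_eq_zero_left hc_zero)
  exact add_eq_zero_iff_eq_neg.2 (heq hz).symm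

theorem vanishesOrNonvanishing_homogeneousComponent (hg : ∀ z ∈ polysector σ 1, aeval z g ≠ 0)
    (k : ℕ) :
    VanishesOrNonvanishing (polysector σ (1 / 2)) fun z => aeval z (homogeneousComponent k g) := by
  cases nonempty_fintype σ
  set q : (σ → ℂ) → Polynomial ℂ := fun z => parityPart k (restrictLine z 0 g) with hq
  have coeff_q (m : ℕ) (z : σ → ℂ) :
      (q z).coeff m = aeval z (homogeneousComponent (2 * m + k % 2) g) := by
    rw [hq, coeff_parityPart, coeff_restrictLine_zero_right]
  have eval_q (z : σ → ℂ) (s : ℂ) : aeval (s • z) g + (-1) ^ k * aeval (-(s • z)) g =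
      2 * s ^ (k % 2) * (q z).eval (s ^ 2) := by
    simpa only [eval_restrictLine, add_zero, neg_smul] using
      eval_add_neg_one_pow_mul_eval_neg k (restrictLine z 0 g) s
  suffices h : VanishesOrNonvanishing (polysector σ (1 / 2)) fun z => (q z).coeff (k / 2) by
    simpa only [coeff_q, Nat.div_add_mod] using h
  rcases vanishesOrNonvanishing_aeval_add_aeval_neg hg (ε := (-1) ^ k) (by simp)
    with hzero | hne
  · refine Or.inl fun z hz => ?_
    have hqz : q z = 0 := eq_of_eval_ofReal_eq (a := 0) fun x hx => by
      obtain ⟨s, hs, hsq, hsz⟩ := exists_smul_mem_polysector hz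
        (mem_sector_one.2 (Complex.ofReal_re x ▸ hx))
      have hprod := (eval_q z s).symm.trans (hzero _ hsz)
      rw [← hsq, Polynomial.eval_zero]
      exact (mul_eq_zero.1 hprod).resolve_left (by simp [hs])
    change (q z).coeff (k / 2) = 0
    rw [hqz, Polynomial.coeff_zero]
  · refine IsHurwitzFamily.vanishesOrNonvanishing_coeff (d := g.totalDegree)
      (isOpen_polysector isOpen_sector_half) (isPreconnected_polysector convex_sector_half)
      ⟨?_, ?_, ?_⟩ (k / 2)
    · exact fun z _ => (natDegree_parityPart_le _ _).trans
        (natDegree_restrictLine_zero_right_le _ _)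
    · intro i
      simpa only [coeff_q] using (differentiable_aeval _).differentiableOn
    · intro z hz t ht
      obtain ⟨s, -, rfl, hsz⟩ := exists_smul_mem_polysector hz (mem_sector_one.2 ht)
      exact right_ne_zero_of_mul ((eval_q z s).symm.trans_ne (hne _ hsz))

end HurwitzStable

theorem homogeneousComponent_of_hurwitzStable_general {σ : Type*} (g : MvPolynomial σ ℝ)
    (hstable : ∀ z ∈ polysector σ 1, aeval z g ≠ 0) (k : ℕ) :
    homogeneousComponent k g = 0 ∨
      ∀ z ∈ polysector σ (1 / 2), aeval z (homogeneousComponent k g) ≠ 0 := by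
  obtain ⟨s, p, rfl⟩ := exists_finset_rename g
  have hp (z : s → ℂ) (hz : z ∈ polysector s 1) : aeval z p ≠ 0 := by
    obtain ⟨w, hw, rfl⟩ := exists_mem_polysector_comp_eq one_pos Subtype.val_injective hz
    simpa only [aeval_rename] using hstable w hw
  rw [← rename_homogeneousComponent]
  refine (vanishesOrNonvanishing_homogeneousComponent hp k).imp (fun hzero => ?_) fun hne z hz => ?_
  · rw [eq_zero_of_forall_polysector one_half_pos hzero, map_zero]
  · rw [aeval_rename]
    exact hne _ fun i => hz i

/-- Every homogeneous (degree-`k`) part of a Hurwitz-stable (`Γ₁`-stable) real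
polynomial is either identically zero or `Γ_{1/2}`-stable. -/
theorem homogeneousComponent_of_hurwitzStable {n : ℕ} (g : MvPolynomial (Fin n) ℝ)
    (hstable : SectorStable 1 g) (k : ℕ) :
    MvPolynomial.homogeneousComponent k g = 0 ∨
      SectorStable (1 / 2) (MvPolynomial.homogeneousComponent k g) :=
  homogeneousComponent_of_hurwitzStable_general g hstable k
end

section
/- Let G = (V, E) be a finite graph on n vertices with edge weights w : E → ℝ_{≥0} and vertex weights λ : V → ℝ_{≥0}, and define the weight of a matching M as weight(M) = Π_{e∈M} w(e) · Π_{v not covered by M} λ(v). Then the homogeneous polynomial in 2n variables g(z₁,…,zₙ,z'₁,…,z'ₙ) = Σ_{M a matching of G} weight(M) · Π_{v not covered by M} z_v · Π_{v covered by M} z'_v is either identically zero or Γ_{1/2}-stable (i.e., sector-stable for a sector of aperture π/2). -/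
open Finset
open scoped Classical

/-- `z` lies in the open sector `Γ_α` of aperture `απ` centered on the positive real axis. -/
def inSector (α : ℝ) (z : ℂ) : Prop := z ≠ 0 ∧ |z.arg| < α * Real.pi / 2

/-- `M` is a matching of `G`: a set of edges of `G` that are pairwise vertex-disjoint. -/
def IsMatching {n : ℕ} (G : SimpleGraph (Fin n)) (M : Finset (Sym2 (Fin n))) : Prop :=
  (∀ e ∈ M, e ∈ G.edgeSet) ∧
    ∀ e ∈ M, ∀ f ∈ M, e ≠ f → ∀ v : Fin n, ¬(v ∈ e ∧ v ∈ f)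

/-- The vertices not covered by the matching `M` (the monomers). -/
noncomputable def uncovered {n : ℕ} (M : Finset (Sym2 (Fin n))) : Finset (Fin n) :=
  Finset.univ.filter (fun v => ∀ e ∈ M, v ∉ e)

/-- `weight(M) = Π_{e ∈ M} w(e) · Π_{v not covered by M} λ(v)`. -/
noncomputable def matchingWeight {n : ℕ} (w : Sym2 (Fin n) → ℝ) (lam : Fin n → ℝ)
    (M : Finset (Sym2 (Fin n))) : ℝ :=
  (∏ e ∈ M, w e) * ∏ v ∈ uncovered M, lam v

/-!
Fix a set `S` of vertices, let `x v` be the complex activity of the vertex `v`, and let `Z S` be the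
sum over the matchings inside `S`. Splitting by the partner of `v` gives
`Z S / Z (S - v) = x v + ∑ u, w(vu) * (Z (S - v) / Z (S - v - u))⁻¹`, so by induction all these
ratios stay in the cone consisting of `0` and the open right half-plane. Elements of this cone
cannot cancel, so if `Z S = 0`, then for each `v` either `Z (S - v) = 0` or `x v = 0`, and by
induction the terms with a monomer `v` vanish. The others come from perfect matchings, are
nonnegative reals, and vanish too: `Z S` is zero only if each of its terms is.

For `z` and `z'` in the sector of aperture `π / 2`, the quotients `z v / z' v` lie in the right
half-plane; taking `x v = λ v * (z v / z' v)` and multiplying `Z` by `∏ v, z' v` yields the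
homogeneous polynomial.
-/

section Matchings

variable {V : Type*} [DecidableEq V] {G : SimpleGraph V} {S : Finset V} {M : Finset (Sym2 V)}
  {u v : V}

/-- The matchings of the subgraph of `G` induced on `S`, as sets of edges. This is the notion
`IsMatching` on an arbitrary vertex type, restricted to a finite set of vertices so that vertices
can be removed one at a time. -/
noncomputable def matchings (G : SimpleGraph V) (S : Finset V) : Finset (Finset (Sym2 V)) :=
  {M ∈ S.sym2.powerset | (∀ e ∈ M, e ∈ G.edgeSet) ∧
    ∀ e ∈ M, ∀ f ∈ M, e ≠ f → ∀ v, ¬(v ∈ e ∧ v ∈ f)}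

/-- The vertices of `S` left uncovered by `M`. -/
def monomers (S : Finset V) (M : Finset (Sym2 V)) : Finset V :=
  {v ∈ S | ∀ e ∈ M, v ∉ e}

lemma mem_matchings : M ∈ matchings G S ↔ (∀ e ∈ M, ∀ v ∈ e, v ∈ S) ∧
    (∀ e ∈ M, e ∈ G.edgeSet) ∧ ∀ e ∈ M, ∀ f ∈ M, e ≠ f → ∀ v, ¬(v ∈ e ∧ v ∈ f) := by
  simp [matchings, subset_iff, mem_sym2_iff]

lemma mem_monomers : v ∈ monomers S M ↔ v ∈ S ∧ ∀ e ∈ M, v ∉ e := mem_filter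

lemma monomers_subset : monomers S M ⊆ S := filter_subset _ _

lemma mem_matchings_erase :
    M ∈ matchings G (S.erase v) ↔ M ∈ matchings G S ∧ ∀ e ∈ M, v ∉ e := by
  simp only [mem_matchings, mem_erase]
  constructor
  · rintro ⟨hS, hM⟩
    exact ⟨⟨fun e he t ht => (hS e he t ht).2, hM⟩, fun e he hv => (hS e he v hv).1 rfl⟩
  · rintro ⟨⟨hS, hM⟩, hv⟩
    exact ⟨fun e he t ht => ⟨fun h => hv e he (h ▸ ht), hS e he t ht⟩, hM⟩

lemma notMem_of_mem_matchings_erase (hM : M ∈ matchings G (S.erase v)) : s(v, u) ∉ M :=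
  fun h => (mem_matchings_erase.1 hM).2 _ h (Sym2.mem_mk_left v u)

lemma insert_mem_matchings (hv : v ∈ S) (hu : u ∈ S) (hvu : G.Adj v u)
    (hM : M ∈ matchings G ((S.erase v).erase u)) : insert s(v, u) M ∈ matchings G S := by
  obtain ⟨hM, huM⟩ := mem_matchings_erase.1 hM
  obtain ⟨hM, hvM⟩ := mem_matchings_erase.1 hM
  obtain ⟨hS, hG, hdisj⟩ := mem_matchings.1 hM
  have hnew : ∀ f ∈ M, ∀ t ∈ s(v, u), t ∉ f := by
    rintro f hf t ht
    rcases Sym2.mem_iff.1 ht with rfl | rfl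
    exacts [hvM f hf, huM f hf]
  refine mem_matchings.2 ⟨?_, (forall_mem_insert _ _ _).2 ⟨hvu, hG⟩, ?_⟩
  · refine (forall_mem_insert _ _ _).2 ⟨fun t ht => ?_, hS⟩
    rcases Sym2.mem_iff.1 ht with rfl | rfl <;> assumption
  · rintro e he f hf hef t ⟨hte, htf⟩
    rcases mem_insert.1 he with rfl | he <;> rcases mem_insert.1 hf with rfl | hf
    exacts [hef rfl, hnew f hf t hte htf, hnew e he t htf hte, hdisj e he f hf hef t ⟨hte, htf⟩]

lemma erase_mem_matchings (hM : M ∈ matchings G S) (he : s(v, u) ∈ M) :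
    M.erase s(v, u) ∈ matchings G ((S.erase v).erase u) := by
  obtain ⟨hS, hG, hdisj⟩ := mem_matchings.1 hM
  have hM' : M.erase s(v, u) ∈ matchings G S := mem_matchings.2
    ⟨fun e h => hS e (mem_of_mem_erase h), fun e h => hG e (mem_of_mem_erase h),
      fun e h f h' => hdisj e (mem_of_mem_erase h) f (mem_of_mem_erase h')⟩
  have hfree : ∀ t ∈ s(v, u), ∀ f ∈ M.erase s(v, u), t ∉ f := fun t ht f hf htf =>
    hdisj f (mem_of_mem_erase hf) _ he (ne_of_mem_erase hf) t ⟨htf, ht⟩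
  exact mem_matchings_erase.2 ⟨mem_matchings_erase.2
    ⟨hM', hfree v (Sym2.mem_mk_left v u)⟩, hfree u (Sym2.mem_mk_right v u)⟩

lemma filter_mem_matchings_eq_image (hv : v ∈ S) (hu : u ∈ S) (hvu : G.Adj v u) :
    {M ∈ matchings G S | s(v, u) ∈ M} =
      (matchings G ((S.erase v).erase u)).image (insert s(v, u)) := by
  ext M
  simp only [mem_filter, mem_image]
  constructor
  · rintro ⟨hM, he⟩
    exact ⟨M.erase s(v, u), erase_mem_matchings hM he, insert_erase he⟩
  · rintro ⟨M, hM, rfl⟩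
    exact ⟨insert_mem_matchings hv hu hvu hM, mem_insert_self _ _⟩

lemma filter_covered_matchings_eq_biUnion (G : SimpleGraph V) (S : Finset V) (v : V) :
    {M ∈ matchings G S | ¬∀ e ∈ M, v ∉ e} =
      {u ∈ S.erase v | G.Adj v u}.biUnion fun u => {M ∈ matchings G S | s(v, u) ∈ M} := by
  ext M
  simp only [mem_filter, mem_biUnion, not_forall, not_not]
  constructor
  · rintro ⟨hM, e, he, hve⟩
    obtain ⟨u, rfl⟩ := Sym2.mem_iff_exists.1 hve
    obtain ⟨hS, hG, -⟩ := mem_matchings.1 hM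
    have hvu : G.Adj v u := hG _ he
    exact ⟨u, ⟨mem_erase.2 ⟨hvu.ne', hS _ he u (Sym2.mem_mk_right v u)⟩, hvu⟩, hM, he⟩
  · rintro ⟨u, -, hM, he⟩
    exact ⟨hM, s(v, u), he, Sym2.mem_mk_left v u⟩

lemma pairwiseDisjoint_filter_mem_matchings (G : SimpleGraph V) (S : Finset V) (v : V)
    (T : Set V) : T.PairwiseDisjoint fun u => {M ∈ matchings G S | s(v, u) ∈ M} := by
  intro a _ b _ hab
  refine disjoint_left.2 fun M ha hb => ?_
  obtain ⟨hM, ha⟩ := mem_filter.1 ha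
  exact (mem_matchings.1 hM).2.2 _ ha _ (mem_filter.1 hb).2 (mt Sym2.congr_right.1 hab) v
    ⟨Sym2.mem_mk_left v a, Sym2.mem_mk_left v b⟩

lemma monomers_eq_insert (hv : v ∈ monomers S M) :
    monomers S M = insert v (monomers (S.erase v) M) := by
  ext t
  by_cases h : t = v
  · simpa [h] using hv
  · simp [mem_monomers, h]

lemma notMem_monomers_erase : v ∉ monomers (S.erase v) M := by
  simp [mem_monomers]

lemma monomers_insert :
    monomers S (insert s(v, u) M) = monomers ((S.erase v).erase u) M := by
  ext t
  simp only [mem_monomers, mem_erase, forall_mem_insert, Sym2.mem_iff, not_or]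
  tauto

end Matchings

section Weights

variable {V R : Type*} [DecidableEq V] [CommSemiring R] {G : SimpleGraph V} {S : Finset V}
  {M : Finset (Sym2 V)} {u v : V} {w : Sym2 V → R} {x : V → R}

/-- The weight of a matching `M` inside `S`, with edge weights `w` and vertex weights `x`. In the
application `x` also carries the variables of the polynomial. -/
def monomerDimerWeight (w : Sym2 V → R) (x : V → R) (S : Finset V) (M : Finset (Sym2 V)) : R :=
  (∏ e ∈ M, w e) * ∏ v ∈ monomers S M, x v

/-- The monomer-dimer partition function of the subgraph of `G` induced on `S`. -/
noncomputable def monomerDimerSum (G : SimpleGraph V) (w : Sym2 V → R) (x : V → R)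
    (S : Finset V) : R :=
  ∑ M ∈ matchings G S, monomerDimerWeight w x S M

lemma monomerDimerWeight_of_mem_monomers (hv : v ∈ monomers S M) :
    monomerDimerWeight w x S M = x v * monomerDimerWeight w x (S.erase v) M := by
  rw [monomerDimerWeight, monomers_eq_insert hv, prod_insert notMem_monomers_erase,
    monomerDimerWeight, mul_left_comm]

lemma monomerDimerWeight_insert (he : s(v, u) ∉ M) :
    monomerDimerWeight w x S (insert s(v, u) M) =
      w s(v, u) * monomerDimerWeight w x ((S.erase v).erase u) M := by
  rw [monomerDimerWeight, prod_insert he, monomers_insert, monomerDimerWeight, mul_assoc]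

lemma sum_filter_uncovered_monomerDimerWeight (hv : v ∈ S) :
    ∑ M ∈ matchings G S with ∀ e ∈ M, v ∉ e, monomerDimerWeight w x S M =
      x v * monomerDimerSum G w x (S.erase v) := by
  have hfilter : {M ∈ matchings G S | ∀ e ∈ M, v ∉ e} = matchings G (S.erase v) := by
    ext M
    rw [mem_filter, mem_matchings_erase]
  rw [hfilter, monomerDimerSum, mul_sum]
  exact sum_congr rfl fun M hM =>
    monomerDimerWeight_of_mem_monomers (mem_monomers.2 ⟨hv, (mem_matchings_erase.1 hM).2⟩)

lemma sum_filter_mem_monomerDimerWeight (hv : v ∈ S) (hu : u ∈ S) (hvu : G.Adj v u) :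
    ∑ M ∈ matchings G S with s(v, u) ∈ M, monomerDimerWeight w x S M =
      w s(v, u) * monomerDimerSum G w x ((S.erase v).erase u) := by
  have hnotMem : ∀ M ∈ matchings G ((S.erase v).erase u), s(v, u) ∉ M := fun M hM =>
    notMem_of_mem_matchings_erase (mem_matchings_erase.1 hM).1
  have hinj : Set.InjOn (insert s(v, u))
      (matchings G ((S.erase v).erase u) : Set (Finset (Sym2 V))) := by
    intro M hM N hN h
    rw [← erase_insert (hnotMem M hM), h, erase_insert (hnotMem N hN)]
  rw [filter_mem_matchings_eq_image hv hu hvu, sum_image hinj, monomerDimerSum, mul_sum]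
  exact sum_congr rfl fun M hM => monomerDimerWeight_insert (hnotMem M hM)

theorem monomerDimerSum_eq_add_sum (hv : v ∈ S) :
    monomerDimerSum G w x S = x v * monomerDimerSum G w x (S.erase v) +
      ∑ u ∈ S.erase v with G.Adj v u,
        w s(v, u) * monomerDimerSum G w x ((S.erase v).erase u) := by
  rw [monomerDimerSum, ← sum_filter_add_sum_filter_not _ fun M => ∀ e ∈ M, v ∉ e,
    sum_filter_uncovered_monomerDimerWeight hv, filter_covered_matchings_eq_biUnion,
    sum_biUnion (pairwiseDisjoint_filter_mem_matchings G S v _)]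
  congr 1
  refine sum_congr rfl fun u hu => ?_
  obtain ⟨hu, hvu⟩ := mem_filter.1 hu
  exact sum_filter_mem_monomerDimerWeight hv (mem_of_mem_erase hu) hvu

theorem monomerDimerSum_div_erase {K : Type*} [Field K] {w : Sym2 V → K} {x : V → K}
    (hv : v ∈ S) (h0 : monomerDimerSum G w x (S.erase v) ≠ 0) :
    monomerDimerSum G w x S / monomerDimerSum G w x (S.erase v) =
      x v + ∑ u ∈ S.erase v with G.Adj v u, w s(v, u) *
        (monomerDimerSum G w x (S.erase v) / monomerDimerSum G w x ((S.erase v).erase u))⁻¹ := by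
  rw [monomerDimerSum_eq_add_sum hv, add_div, mul_div_cancel_right₀ _ h0, sum_div]
  simp only [inv_div, mul_div_assoc]

end Weights

section FinVertices

variable {n : ℕ}

lemma filter_isMatching_eq_matchings (G : SimpleGraph (Fin n)) :
    Finset.univ.filter (fun M : Finset (Sym2 (Fin n)) => IsMatching G M) = matchings G univ := by
  ext M
  simp [mem_matchings, IsMatching]

lemma uncovered_eq_monomers (M : Finset (Sym2 (Fin n))) : uncovered M = monomers univ M := by
  ext v
  simp [uncovered, mem_monomers]

lemma matchingWeight_eq_monomerDimerWeight (w : Sym2 (Fin n) → ℝ) (lam : Fin n → ℝ)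
    (M : Finset (Sym2 (Fin n))) :
    matchingWeight w lam M = monomerDimerWeight w lam univ M := by
  rw [matchingWeight, uncovered_eq_monomers, monomerDimerWeight]

end FinVertices

section RightHalfPlane

open scoped ComplexOrder

/-- The open right half-plane together with `0`. Including `0` makes it closed under inversion
(as `0⁻¹ = 0`) and under multiplication by nonnegative reals, without losing the property that a
sum of elements vanishes only if each of them does. -/
def rightHalfPlaneCone : AddSubmonoid ℂ where
  carrier := {c | c = 0 ∨ 0 < c.re}
  zero_mem' := Or.inl rfl
  add_mem' := by
    rintro a b (rfl | ha) (rfl | hb)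
    · simp
    · simpa using Or.inr hb
    · simpa using Or.inr ha
    · exact Or.inr (add_pos ha hb)

variable {c : ℂ}

lemma rightHalfPlaneCone.re_nonneg (hc : c ∈ rightHalfPlaneCone) : 0 ≤ c.re := by
  rcases hc with rfl | hc
  exacts [le_rfl, hc.le]

lemma rightHalfPlaneCone.inv_mem (hc : c ∈ rightHalfPlaneCone) : c⁻¹ ∈ rightHalfPlaneCone := by
  rcases hc with rfl | hc
  · simp
  · have hc0 : c ≠ 0 := by
      rintro rfl
      simp at hc
    exact Or.inr (Complex.inv_re c ▸ div_pos hc (Complex.normSq_pos.2 hc0))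

lemma rightHalfPlaneCone.mul_mem_of_nonneg {r : ℂ} (hr : 0 ≤ r) (hc : c ∈ rightHalfPlaneCone) :
    r * c ∈ rightHalfPlaneCone := by
  rcases hr.eq_or_lt with rfl | hr
  · simp
  rcases hc with rfl | hc
  · simp
  · obtain ⟨hre, him⟩ := Complex.pos_iff.1 hr
    refine Or.inr ?_
    rw [Complex.mul_re, ← him, zero_mul, sub_zero]
    exact mul_pos hre hc

lemma rightHalfPlaneCone.mem_of_nonneg (hc : 0 ≤ c) : c ∈ rightHalfPlaneCone := by
  simpa using rightHalfPlaneCone.mul_mem_of_nonneg (c := 1) hc (Or.inr one_pos)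

lemma rightHalfPlaneCone.eq_zero_of_re_eq_zero (hc : c ∈ rightHalfPlaneCone)
    (h : c.re = 0) : c = 0 :=
  hc.resolve_right h.not_gt

lemma rightHalfPlaneCone.eq_zero_of_add_eq_zero {a b : ℂ} (ha : a ∈ rightHalfPlaneCone)
    (hb : b ∈ rightHalfPlaneCone) (h : a + b = 0) : a = 0 := by
  have hre : a.re + b.re = 0 := by simpa using congrArg Complex.re h
  have := rightHalfPlaneCone.re_nonneg ha
  have := rightHalfPlaneCone.re_nonneg hb
  exact rightHalfPlaneCone.eq_zero_of_re_eq_zero ha (by linarith)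

lemma rightHalfPlaneCone.eq_zero_of_sum_eq_zero {ι : Type*} {s : Finset ι} {f : ι → ℂ}
    (hf : ∀ i ∈ s, f i ∈ rightHalfPlaneCone) (h : ∑ i ∈ s, f i = 0) {i : ι} (hi : i ∈ s) :
    f i = 0 := by
  rw [← add_sum_erase s f hi] at h
  exact rightHalfPlaneCone.eq_zero_of_add_eq_zero (hf i hi)
    (sum_mem fun j hj => hf j (mem_of_mem_erase hj)) h

lemma rightHalfPlaneCone.sum_mul_inv_mem {V : Type*} {G : SimpleGraph V} {S : Finset V} {v : V}
    {w : Sym2 V → ℂ} {c : V → ℂ} (hw : ∀ e ∈ G.edgeSet, 0 ≤ w e)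
    (hc : ∀ u ∈ S, c u ∈ rightHalfPlaneCone) :
    ∑ u ∈ S with G.Adj v u, w s(v, u) * (c u)⁻¹ ∈ rightHalfPlaneCone := by
  refine sum_mem fun u hu => ?_
  obtain ⟨hu, hvu⟩ := mem_filter.1 hu
  exact rightHalfPlaneCone.mul_mem_of_nonneg (hw _ hvu) (rightHalfPlaneCone.inv_mem (hc u hu))

end RightHalfPlane

section Sectors

variable {α β : ℝ} {a b z : ℂ}

lemma inSector_one_iff : inSector 1 z ↔ 0 < z.re := by
  rw [inSector, one_mul, Complex.abs_arg_lt_pi_div_two_iff]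
  constructor
  · rintro ⟨hz, h⟩
    exact h.resolve_right hz
  · intro h
    refine ⟨?_, Or.inl h⟩
    rintro rfl
    simp at h

lemma inSector.div (ha : inSector α a) (hb : inSector β b) : inSector (α + β) (a / b) := by
  obtain ⟨ha0, ha⟩ := ha
  obtain ⟨hb0, hb⟩ := hb
  refine ⟨div_ne_zero ha0 hb0, ?_⟩
  have hsub : |a.arg - b.arg| < (α + β) * Real.pi / 2 := by
    linarith [abs_sub a.arg b.arg]
  rcases lt_or_ge |a.arg - b.arg| Real.pi with hpi | hpi
  · have harg : (a / b).arg = a.arg - b.arg := by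
      rw [← Complex.arg_coe_angle_toReal_eq_arg, Complex.arg_div_coe_angle ha0 hb0,
        ← Real.Angle.coe_sub, Real.Angle.toReal_coe_eq_self_iff]
      exact ⟨(abs_lt.1 hpi).1, (abs_lt.1 hpi).2.le⟩
    rwa [harg]
  · exact (Complex.abs_arg_le_pi _).trans_lt (hpi.trans_lt hsub)

lemma inSector.re_div_pos (ha : inSector (1 / 2) a) (hb : inSector (1 / 2) b) :
    0 < (a / b).re := by
  rw [← inSector_one_iff, ← add_halves (1 : ℝ)]
  exact ha.div hb

end Sectors

section NoCancellation

open scoped ComplexOrder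

variable {V : Type*} [DecidableEq V] {G : SimpleGraph V} {w : Sym2 V → ℂ} {x : V → ℂ}
  {S : Finset V} {v : V}

theorem monomerDimerSum_div_erase_mem_rightHalfPlaneCone (hw : ∀ e ∈ G.edgeSet, 0 ≤ w e)
    (hx : ∀ v ∈ S, x v ∈ rightHalfPlaneCone) (hv : v ∈ S) :
    monomerDimerSum G w x S / monomerDimerSum G w x (S.erase v) ∈ rightHalfPlaneCone := by
  induction S using Finset.strongInduction generalizing v with
  | H S ih =>
    by_cases h0 : monomerDimerSum G w x (S.erase v) = 0
    · rw [h0, div_zero]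
      exact zero_mem _
    rw [monomerDimerSum_div_erase hv h0]
    exact add_mem (hx v hv) (rightHalfPlaneCone.sum_mul_inv_mem hw fun u hu =>
      ih _ (erase_ssubset hv) (fun t ht => hx t (mem_of_mem_erase ht)) hu)

lemma vertexWeight_eq_zero_of_monomerDimerSum_eq_zero (hw : ∀ e ∈ G.edgeSet, 0 ≤ w e)
    (hx : ∀ v ∈ S, x v ∈ rightHalfPlaneCone) (hv : v ∈ S) (h : monomerDimerSum G w x S = 0)
    (h0 : monomerDimerSum G w x (S.erase v) ≠ 0) : x v = 0 := by
  have hratio := monomerDimerSum_div_erase hv h0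
  rw [h, zero_div] at hratio
  exact rightHalfPlaneCone.eq_zero_of_add_eq_zero (hx v hv)
    (rightHalfPlaneCone.sum_mul_inv_mem hw fun u hu =>
      monomerDimerSum_div_erase_mem_rightHalfPlaneCone hw
        (fun t ht => hx t (mem_of_mem_erase ht)) hu) hratio.symm

theorem monomerDimerWeight_eq_zero_of_monomerDimerSum_eq_zero (hw : ∀ e ∈ G.edgeSet, 0 ≤ w e)
    (hx : ∀ v ∈ S, x v ∈ rightHalfPlaneCone) (h : monomerDimerSum G w x S = 0)
    {M : Finset (Sym2 V)} (hM : M ∈ matchings G S) : monomerDimerWeight w x S M = 0 := by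
  induction S using Finset.strongInduction generalizing M with
  | H S ih =>
    have hmonomer : ∀ N ∈ matchings G S, ∀ v ∈ monomers S N, monomerDimerWeight w x S N = 0 := by
      intro N hN v hv
      obtain ⟨hvS, hvN⟩ := mem_monomers.1 hv
      rw [monomerDimerWeight_of_mem_monomers hv]
      by_cases h0 : monomerDimerSum G w x (S.erase v) = 0
      · rw [ih _ (erase_ssubset hvS) (fun t ht => hx t (mem_of_mem_erase ht)) h0
          (mem_matchings_erase.2 ⟨hN, hvN⟩), mul_zero]
      · rw [vertexWeight_eq_zero_of_monomerDimerSum_eq_zero hw hx hvS h h0, zero_mul]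
    -- Only perfect matchings remain, and their weights are nonnegative reals.
    have hcone : ∀ N ∈ matchings G S, monomerDimerWeight w x S N ∈ rightHalfPlaneCone := by
      intro N hN
      rcases (monomers S N).eq_empty_or_nonempty with hperfect | ⟨v, hv⟩
      · rw [monomerDimerWeight, hperfect, prod_empty, mul_one]
        exact rightHalfPlaneCone.mem_of_nonneg
          (prod_nonneg fun e he => hw e ((mem_matchings.1 hN).2.1 e he))
      · rw [hmonomer N hN v hv]
        exact zero_mem _
    exact rightHalfPlaneCone.eq_zero_of_sum_eq_zero hcone h hM

end NoCancellation

section Homogenization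

variable {V : Type*} [DecidableEq V] {S : Finset V}

lemma prod_mul_prod_sdiff_eq_prod_mul_prod_div {K : Type*} [CommGroupWithZero K] {T : Finset V}
    {z z' : V → K} (hT : T ⊆ S) (hz' : ∀ v ∈ S, z' v ≠ 0) :
    (∏ v ∈ T, z v) * ∏ v ∈ S \ T, z' v = (∏ v ∈ S, z' v) * ∏ v ∈ T, z v / z' v := by
  have hT0 : ∏ v ∈ T, z' v ≠ 0 := prod_ne_zero_iff.2 fun v hv => hz' v (hT hv)
  rw [prod_div_distrib, ← prod_sdiff hT]
  field_simp

lemma monomerDimerWeight_ofReal_mul (w : Sym2 V → ℝ) (lam : V → ℝ) (y : V → ℂ)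
    (M : Finset (Sym2 V)) :
    monomerDimerWeight (fun e => (w e : ℂ)) (fun v => lam v * y v) S M =
      ((monomerDimerWeight w lam S M : ℝ) : ℂ) * ∏ v ∈ monomers S M, y v := by
  simp only [monomerDimerWeight, prod_mul_distrib]
  push_cast
  ring

lemma sum_monomerDimerWeight_mul_eq_prod_mul_monomerDimerSum (G : SimpleGraph V)
    (w : Sym2 V → ℝ) (lam : V → ℝ) {z z' : V → ℂ} (hz' : ∀ v ∈ S, z' v ≠ 0) :
    ∑ M ∈ matchings G S, ((monomerDimerWeight w lam S M : ℝ) : ℂ) *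
        ((∏ v ∈ monomers S M, z v) * ∏ v ∈ S \ monomers S M, z' v) =
      (∏ v ∈ S, z' v) *
        monomerDimerSum G (fun e => (w e : ℂ)) (fun v => lam v * (z v / z' v)) S := by
  rw [monomerDimerSum, mul_sum]
  refine sum_congr rfl fun M _ => ?_
  rw [monomerDimerWeight_ofReal_mul,
    prod_mul_prod_sdiff_eq_prod_mul_prod_div monomers_subset hz', mul_left_comm]

theorem matching_monomer_dimer_poly_sectorStable_general (G : SimpleGraph V) (S : Finset V)
    {w : Sym2 V → ℝ} (hw : ∀ e ∈ G.edgeSet, 0 ≤ w e) {lam : V → ℝ} (hlam : ∀ v ∈ S, 0 ≤ lam v) :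
    (∀ z z' : V → ℂ,
      ∑ M ∈ matchings G S, ((monomerDimerWeight w lam S M : ℝ) : ℂ) *
        ((∏ v ∈ monomers S M, z v) * ∏ v ∈ S \ monomers S M, z' v) = 0) ∨
    (∀ z z' : V → ℂ, (∀ v ∈ S, 0 < (z v / z' v).re) →
      ∑ M ∈ matchings G S, ((monomerDimerWeight w lam S M : ℝ) : ℂ) *
        ((∏ v ∈ monomers S M, z v) * ∏ v ∈ S \ monomers S M, z' v) ≠ 0) := by
  by_cases hzero : ∀ M ∈ matchings G S, monomerDimerWeight w lam S M = 0
  · exact Or.inl fun z z' => sum_eq_zero fun M hM => by simp [hzero M hM]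
  refine Or.inr fun z z' hz hsum => hzero fun M hM => ?_
  have hquot : ∀ v ∈ S, z v / z' v ≠ 0 := fun v hv h => by simpa [h] using hz v hv
  have hz' : ∀ v ∈ S, z' v ≠ 0 := fun v hv => (div_ne_zero_iff.1 (hquot v hv)).2
  rw [sum_monomerDimerWeight_mul_eq_prod_mul_monomerDimerSum G w lam hz'] at hsum
  have hZ := (mul_eq_zero.1 hsum).resolve_left (prod_ne_zero_iff.2 hz')
  have hweight := monomerDimerWeight_eq_zero_of_monomerDimerSum_eq_zero
    (fun e he => Complex.zero_le_real.2 (hw e he))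
    (fun v hv => rightHalfPlaneCone.mul_mem_of_nonneg (Complex.zero_le_real.2 (hlam v hv))
      (Or.inr (hz v hv))) hZ hM
  rw [monomerDimerWeight_ofReal_mul] at hweight
  exact Complex.ofReal_eq_zero.1 ((mul_eq_zero.1 hweight).resolve_right
    (prod_ne_zero_iff.2 fun v hv => hquot v (mem_monomers.1 hv).1))

end Homogenization

/-- The homogeneous polynomial in `2n` variables
`g(z, z') = Σ_{M matching of G} weight(M) (Π_{v ∉ V(M)} z_v)(Π_{v ∈ V(M)} z'_v)`
encoding all matchings is either identically zero or `Γ_{1/2}`-stable. -/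
theorem matching_monomer_dimer_poly_sectorStable (n : ℕ) (G : SimpleGraph (Fin n))
    (w : Sym2 (Fin n) → ℝ) (hw : ∀ e ∈ G.edgeSet, 0 ≤ w e)
    (lam : Fin n → ℝ) (hlam : ∀ v, 0 ≤ lam v) :
    (∀ z z' : Fin n → ℂ,
      (∑ M ∈ Finset.univ.filter (fun M : Finset (Sym2 (Fin n)) => IsMatching G M),
        (matchingWeight w lam M : ℂ) *
          ((∏ v ∈ uncovered M, z v) * ∏ v ∈ (uncovered M)ᶜ, z' v)) = 0) ∨
    (∀ z z' : Fin n → ℂ,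
      (∀ v, inSector (1 / 2) (z v)) → (∀ v, inSector (1 / 2) (z' v)) →
      (∑ M ∈ Finset.univ.filter (fun M : Finset (Sym2 (Fin n)) => IsMatching G M),
        (matchingWeight w lam M : ℂ) *
          ((∏ v ∈ uncovered M, z v) * ∏ v ∈ (uncovered M)ᶜ, z' v)) ≠ 0) := by
  simp only [filter_isMatching_eq_matchings, matchingWeight_eq_monomerDimerWeight,
    uncovered_eq_monomers, compl_eq_univ_sdiff]
  exact (matching_monomer_dimer_poly_sectorStable_general G univ hw fun v _ => hlam v).imp_right
    fun h z z' hz hz' => h z z' fun v _ => (hz v).re_div_pos (hz' v)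
end
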